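/- arXiv:2409.07264 — 2 statements merged into one kernel-verified Lean document; each statement's English description precedes it below -/
import Mathlib

section
/- Let φ : P → P be the ℂ-algebra endomorphism with φ(S_ρ) = S_ρ for all ρ ∈ σ, φ(T_ρ) = S_{ι(ρ)}·T_ρ if ι(ρ) ≠ ρ, and φ(T_ρ) = T_ρ if ι(ρ) = ρ. Then φ(I′) ⊆ I, so φ induces a ℂ-algebra homomorphism φ̄ : P/I′ → P/I; moreover, writing s′ and s for the classes of the product ∏_{ρ∈σ} S_ρ in P/I′ and in P/I respectively, one has φ̄(s′) = s, and the induced ℂ-algebra homomorphism of localizations (P/I′)[1/s′] → (P/I)[1/s] is bijective. (Algebraic form of the birationality assertion of Lemma 4.6 of the paper: Spec R → Spec R′ is birational.) -/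
/-!
Modulo `I` one has `T_{ι ρ} = -T_ρ` for paired rays, exactly as `v (ι ρ) = -v ρ` in `W`. A relation
`c` can therefore be folded onto `Sig1` by moving the coefficient of each ray outside `Sig1`, with
the opposite sign, to the opposite ray (`foldCoeff`). Folding preserves `∑ c ρ • f ρ` for every
family `f` with `f (ι ρ) = -f ρ` on paired rays (`sum_foldCoeff`). For `f = v` this says that folding
maps relations to relations, and for `f ρ` the class of `Ŝ_ρ T_ρ` it says that `φ` maps the
generator of `I'` attached to `c` to an element congruent modulo `I` to the generator attached to
the folded relation. Hence `φ(I') ⊆ I`.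

Once every `S_ρ` is invertible, `φ` has the inverse `T_ρ ↦ T_ρ / S_{ι ρ}` on paired rays. It kills
`T_ρ + T_{ι ρ}` because `S_ρ T_ρ + S_{ι ρ} T_{ι ρ}` belongs to `I'`, by the relation
`v ρ + v (ι ρ) = 0`; and it maps the generator of `I` attached to `u` to the generator of `I'`
attached to the same `u`.
-/


open scoped BigOperators
open MvPolynomial


/-- The coefficients `c` folded onto `Sig1`: the coefficient of a ray outside `Sig1` is moved, with
the opposite sign, to its opposite ray. No choice of one ray per pair is needed, since coefficients
on a pair contained in `Sig1` are left unchanged. -/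
def foldCoeff {σ : Type*} [DecidableEq σ] (ι : σ → σ) (Sig1 : Finset σ) (c : σ → ℂ) (ρ : σ) : ℂ :=
  if ρ ∈ Sig1 then c ρ - (if ι ρ ∈ Sig1 then 0 else c (ι ρ)) else 0

theorem sum_foldCoeff {σ : Type*} [Fintype σ] [DecidableEq σ]
    (ι : σ → σ) (hι : Function.Involutive ι)
    (Sig1 : Finset σ) (hSig : ∀ ρ : σ, ρ ∈ Sig1 ∨ ι ρ ∈ Sig1)
    {M : Type*} [AddCommGroup M] [Module ℂ M]
    (f : σ → M) (hf : ∀ ρ : σ, ι ρ ≠ ρ → f (ι ρ) = -f ρ) (c : σ → ℂ) :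
    ∑ ρ, foldCoeff ι Sig1 c ρ • f ρ = ∑ ρ, c ρ • f ρ := by
  -- Reindex by `ι` the part of the sum coming from the moved coefficients.
  have key : ∑ ρ, (if ρ ∈ Sig1 then (if ι ρ ∈ Sig1 then 0 else c (ι ρ)) else 0) • f ρ
      = ∑ ρ, (if ρ ∈ Sig1 then 0 else -c ρ) • f ρ := by
    refine Fintype.sum_equiv hι.toPerm _ _ fun ρ => ?_
    rw [Function.Involutive.coe_toPerm]
    by_cases h1 : ρ ∈ Sig1 <;> by_cases h2 : ι ρ ∈ Sig1
    · simp [h1, h2]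
    · have hne : ι ρ ≠ ρ := fun h => h2 (h.symm ▸ h1)
      simp [h1, h2, hf ρ hne]
    · simp [h1, h2]
    · exact absurd (hSig ρ) (by tauto)
  have : ∀ ρ, foldCoeff ι Sig1 c ρ • f ρ = c ρ • f ρ + (if ρ ∈ Sig1 then 0 else -c ρ) • f ρ
      - (if ρ ∈ Sig1 then (if ι ρ ∈ Sig1 then 0 else c (ι ρ)) else 0) • f ρ := by
    intro ρ
    rw [← add_smul, ← sub_smul]
    congr 1
    unfold foldCoeff
    split_ifs <;> ring
  rw [Finset.sum_congr rfl fun ρ _ => this ρ, Finset.sum_sub_distrib, Finset.sum_add_distrib, key]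
  abel

/-- A ring endomorphism `φ` of `P` with `φ I' ⊆ I` and `φ s = s` induces an isomorphism
`(P/I')[1/s] → (P/I)[1/s]` as soon as some `ψ : P → (P/I')[1/s]` vanishing on `I` induces its
inverse. The condition that `ψ` gives a right inverse is stated for every `g` extending `φ`, so
that it can be checked without unfolding the construction of the induced map. -/
theorem exists_bijective_away {P : Type*} [CommRing P] (I' I : Ideal P) (s : P) (φ : P →+* P)
    (hφ : ∀ p ∈ I', φ p ∈ I) (hs : φ s = s)
    (ψ : P →+* Localization.Away (Ideal.Quotient.mk I' s))
    (hψ : ∀ p ∈ I, ψ p = 0)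
    (h1 : ∀ p, ψ (φ p) = algebraMap (P ⧸ I') _ (Ideal.Quotient.mk I' p))
    (h2 : ∀ g : Localization.Away (Ideal.Quotient.mk I' s) →+*
        Localization.Away (Ideal.Quotient.mk I s),
      (∀ p, g (algebraMap (P ⧸ I') _ (Ideal.Quotient.mk I' p)) =
        algebraMap (P ⧸ I) _ (Ideal.Quotient.mk I (φ p))) →
      ∀ p, g (ψ p) = algebraMap (P ⧸ I) _ (Ideal.Quotient.mk I p)) :
    ∃ g : Localization.Away (Ideal.Quotient.mk I' s) →+*
        Localization.Away (Ideal.Quotient.mk I s),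
      (∀ p, g (algebraMap (P ⧸ I') _ (Ideal.Quotient.mk I' p)) =
        algebraMap (P ⧸ I) _ (Ideal.Quotient.mk I (φ p))) ∧ Function.Bijective g := by
  let f : P ⧸ I' →+* Localization.Away (Ideal.Quotient.mk I s) :=
    Ideal.Quotient.lift I' (((algebraMap (P ⧸ I) _).comp (Ideal.Quotient.mk I)).comp φ)
      (fun p hp => by simp [Ideal.Quotient.eq_zero_iff_mem.2 (hφ p hp)])
  have hf : IsUnit (f (Ideal.Quotient.mk I' s)) := by
    simpa [f, hs] using IsLocalization.Away.algebraMap_isUnit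
      (S := Localization.Away (Ideal.Quotient.mk I s)) (Ideal.Quotient.mk I s)
  let g : Localization.Away (Ideal.Quotient.mk I' s) →+*
    Localization.Away (Ideal.Quotient.mk I s) := IsLocalization.Away.lift _ hf
  have hg : ∀ p, g (algebraMap (P ⧸ I') _ (Ideal.Quotient.mk I' p)) =
        algebraMap (P ⧸ I) _ (Ideal.Quotient.mk I (φ p)) := fun p => by
    simp [g, f, IsLocalization.Away.lift_eq]
  let f' : P ⧸ I →+* Localization.Away (Ideal.Quotient.mk I' s) := Ideal.Quotient.lift I ψ hψ
  have hf' : IsUnit (f' (Ideal.Quotient.mk I s)) := by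
    have : f' (Ideal.Quotient.mk I s) = algebraMap (P ⧸ I') _ (Ideal.Quotient.mk I' s) := by
      rw [← h1, hs]; simp [f']
    rw [this]
    exact IsLocalization.Away.algebraMap_isUnit _
  let h : Localization.Away (Ideal.Quotient.mk I s) →+*
    Localization.Away (Ideal.Quotient.mk I' s) := IsLocalization.Away.lift _ hf'
  have hh : ∀ p, h (algebraMap (P ⧸ I) _ (Ideal.Quotient.mk I p)) = ψ p := fun p => by
    simp [h, f', IsLocalization.Away.lift_eq]
  have hgh : g.comp h = RingHom.id _ := by
    refine IsLocalization.ringHom_ext (Submonoid.powers (Ideal.Quotient.mk I s)) ?_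
    refine Ideal.Quotient.ringHom_ext (RingHom.ext fun p => ?_)
    simp only [RingHom.comp_apply, hh, h2 g hg p, RingHom.id_apply]
  have hhg : h.comp g = RingHom.id _ := by
    refine IsLocalization.ringHom_ext (Submonoid.powers (Ideal.Quotient.mk I' s)) ?_
    refine Ideal.Quotient.ringHom_ext (RingHom.ext fun p => ?_)
    simp only [RingHom.comp_apply, hg, hh, h1, RingHom.id_apply]
  exact ⟨g, hg, Function.bijective_iff_has_inverse.2
    ⟨h, fun x => RingHom.congr_fun hhg x, fun x => RingHom.congr_fun hgh x⟩⟩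

theorem map_mem {σ : Type*} [Fintype σ] [DecidableEq σ]
    (ι : σ → σ) (hι : Function.Involutive ι)
    (Sig1 : Finset σ) (hSig : ∀ ρ : σ, ρ ∈ Sig1 ∨ ι ρ ∈ Sig1)
    {W : Type*} [AddCommGroup W] [Module ℂ W]
    (v : σ → W) (hv : ∀ ρ : σ, ι ρ ≠ ρ → v (ι ρ) = -v ρ)
    (I' I : Ideal (MvPolynomial (σ ⊕ σ) ℂ))
    (hI' : I' = Ideal.span
      {p : MvPolynomial (σ ⊕ σ) ℂ |
        ∃ c : σ → ℂ, (∑ ρ : σ, c ρ • v ρ = 0) ∧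
          p = ∑ ρ : σ, C (c ρ) * X (Sum.inl ρ) * X (Sum.inr ρ)})
    (hI : I = Ideal.span
      ({p : MvPolynomial (σ ⊕ σ) ℂ |
          ∃ u : σ → ℂ, (∑ ρ : σ, u ρ • v ρ = 0) ∧ (∀ ρ ∉ Sig1, u ρ = 0) ∧
            p = ∑ ρ ∈ Sig1,
              C (u ρ) *
                (if ι ρ = ρ then X (Sum.inl ρ)
                  else X (Sum.inl ρ) * X (Sum.inl (ι ρ))) * X (Sum.inr ρ)} ∪
       {p : MvPolynomial (σ ⊕ σ) ℂ |
          ∃ ρ : σ, ι ρ ≠ ρ ∧ p = X (Sum.inr ρ) + X (Sum.inr (ι ρ))}))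
    (φ : MvPolynomial (σ ⊕ σ) ℂ →ₐ[ℂ] MvPolynomial (σ ⊕ σ) ℂ)
    (hφS : ∀ ρ, φ (X (Sum.inl ρ)) = X (Sum.inl ρ))
    (hφT : ∀ ρ, φ (X (Sum.inr ρ)) = if ι ρ = ρ then X (Sum.inr ρ)
      else X (Sum.inl (ι ρ)) * X (Sum.inr ρ))
    (hφC : ∀ a, φ (C a) = C a) : ∀ p ∈ I', φ p ∈ I := by
  suffices hle : I' ≤ I.comap φ from fun p hp => hle hp
  rw [hI', Ideal.span_le]
  rintro p ⟨c, hc, rfl⟩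
  change φ _ ∈ I
  -- The class of `Ŝ_ρ T_ρ` modulo `I`, which is odd under `ι` on paired rays.
  let f : σ → MvPolynomial (σ ⊕ σ) ℂ ⧸ I := fun ρ => Ideal.Quotient.mk I
    ((if ι ρ = ρ then X (Sum.inl ρ)
      else X (Sum.inl ρ) * X (Sum.inl (ι ρ))) * X (Sum.inr ρ))
  have hf : ∀ ρ, ι ρ ≠ ρ → f (ι ρ) = -f ρ := by
    intro ρ hρ
    have hT : (X (Sum.inr ρ) + X (Sum.inr (ι ρ)) : MvPolynomial (σ ⊕ σ) ℂ) ∈ I := by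
      rw [hI]; exact Ideal.subset_span (Or.inr ⟨ρ, hρ, rfl⟩)
    rw [eq_neg_iff_add_eq_zero]
    simp only [f, hι ρ, if_neg hρ, if_neg hρ.symm]
    rw [← map_add, Ideal.Quotient.eq_zero_iff_mem]
    convert I.mul_mem_left (X (Sum.inl ρ) * X (Sum.inl (ι ρ))) hT using 1
    ring
  have hmk : ∀ (a : ℂ) (q : MvPolynomial (σ ⊕ σ) ℂ),
      Ideal.Quotient.mk I (C a * q) = a • Ideal.Quotient.mk I q := fun a q => by
    rw [C_mul']; rfl
  rw [← Ideal.Quotient.eq_zero_iff_mem]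
  have e1 : Ideal.Quotient.mk I (φ (∑ ρ : σ, C (c ρ) * X (Sum.inl ρ) * X (Sum.inr ρ)))
      = ∑ ρ, c ρ • f ρ := by
    simp only [map_sum]
    refine Finset.sum_congr rfl fun ρ _ => ?_
    rw [← hmk, map_mul φ, map_mul φ, hφS, hφT, hφC, mul_assoc]
    congr 1
    split_ifs <;> ring
  rw [e1, ← sum_foldCoeff ι hι Sig1 hSig f hf c]
  have hmem : ∑ ρ ∈ Sig1, C (foldCoeff ι Sig1 c ρ) *
      (if ι ρ = ρ then X (Sum.inl ρ)
        else X (Sum.inl ρ) * X (Sum.inl (ι ρ))) * X (Sum.inr ρ) ∈ I := by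
    rw [hI]
    refine Ideal.subset_span (Or.inl ⟨foldCoeff ι Sig1 c, ?_, ?_, rfl⟩)
    · rw [sum_foldCoeff ι hι Sig1 hSig v hv c, hc]
    · intro ρ hρ
      simp [foldCoeff, hρ]
  rw [← Ideal.Quotient.eq_zero_iff_mem] at hmem
  rw [← hmem, map_sum]
  symm
  refine Finset.sum_subset_zero_on_sdiff (Finset.subset_univ _) (fun ρ hρ => ?_) fun ρ _ => ?_
  · have : ρ ∉ Sig1 := by simpa using hρ
    simp [foldCoeff, this]
  · rw [mul_assoc, hmk]

/-- A homomorphism `α` under which every `S_ρ` is invertible can be modified to send `T_ρ` to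
`α T_ρ / α S_{ι ρ}` on paired rays. -/
theorem exists_divided_hom {σ : Type*} [DecidableEq σ] (ι : σ → σ) {L : Type*} [CommRing L]
    (α : MvPolynomial (σ ⊕ σ) ℂ →+* L) (hunit : ∀ ρ, IsUnit (α (X (Sum.inl ρ)))) :
    ∃ ψ : MvPolynomial (σ ⊕ σ) ℂ →+* L, (∀ a, ψ (C a) = α (C a)) ∧
      (∀ ρ, ψ (X (Sum.inl ρ)) = α (X (Sum.inl ρ))) ∧
      (∀ ρ, ι ρ = ρ → ψ (X (Sum.inr ρ)) = α (X (Sum.inr ρ))) ∧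
      ∀ ρ, ι ρ ≠ ρ → α (X (Sum.inl (ι ρ))) * ψ (X (Sum.inr ρ)) = α (X (Sum.inr ρ)) := by
  refine ⟨eval₂Hom (α.comp C) (Sum.elim (fun ρ => α (X (Sum.inl ρ)))
      (fun ρ => if ι ρ = ρ then α (X (Sum.inr ρ))
        else ((hunit (ι ρ)).unit⁻¹ : Lˣ) * α (X (Sum.inr ρ)))),
    fun a => by simp, fun ρ => by simp, fun ρ h => by simp [h], fun ρ h => ?_⟩
  simp [h, ← mul_assoc]

/-- The homomorphism inducing the inverse of `φ` after inverting the `S_ρ`, for an arbitrary target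
`L'` in which `I'` vanishes and every `S_ρ` is invertible. -/
theorem exists_inverse_hom.{u, w} {σ : Type u} [Fintype σ] [DecidableEq σ]
    (ι : σ → σ) (hι : Function.Involutive ι) (Sig1 : Finset σ)
    {W : Type w} [AddCommGroup W] [Module ℂ W]
    (v : σ → W) (hv : ∀ ρ : σ, ι ρ ≠ ρ → v (ι ρ) = -v ρ)
    (I' I : Ideal (MvPolynomial (σ ⊕ σ) ℂ))
    (hI' : I' = Ideal.span
      {p : MvPolynomial (σ ⊕ σ) ℂ |
        ∃ c : σ → ℂ, (∑ ρ : σ, c ρ • v ρ = 0) ∧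
          p = ∑ ρ : σ, C (c ρ) * X (Sum.inl ρ) * X (Sum.inr ρ)})
    (hI : I = Ideal.span
      ({p : MvPolynomial (σ ⊕ σ) ℂ |
          ∃ u : σ → ℂ, (∑ ρ : σ, u ρ • v ρ = 0) ∧ (∀ ρ ∉ Sig1, u ρ = 0) ∧
            p = ∑ ρ ∈ Sig1,
              C (u ρ) *
                (if ι ρ = ρ then X (Sum.inl ρ)
                  else X (Sum.inl ρ) * X (Sum.inl (ι ρ))) * X (Sum.inr ρ)} ∪
       {p : MvPolynomial (σ ⊕ σ) ℂ |
          ∃ ρ : σ, ι ρ ≠ ρ ∧ p = X (Sum.inr ρ) + X (Sum.inr (ι ρ))}))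
    (φ : MvPolynomial (σ ⊕ σ) ℂ →ₐ[ℂ] MvPolynomial (σ ⊕ σ) ℂ)
    (hφS : ∀ ρ, φ (X (Sum.inl ρ)) = X (Sum.inl ρ))
    (hφT : ∀ ρ, φ (X (Sum.inr ρ)) = if ι ρ = ρ then X (Sum.inr ρ)
      else X (Sum.inl (ι ρ)) * X (Sum.inr ρ))
    (hφC : ∀ a, φ (C a) = C a)
    {L' : Type u} [CommRing L'] (α : MvPolynomial (σ ⊕ σ) ℂ →+* L')
    (hαI : ∀ p ∈ I', α p = 0) (hunit : ∀ ρ, IsUnit (α (X (Sum.inl ρ)))) :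
    ∃ ψ : MvPolynomial (σ ⊕ σ) ℂ →+* L', (∀ p ∈ I, ψ p = 0) ∧ (∀ p, ψ (φ p) = α p) ∧
      ∀ {L : Type u} [CommRing L] (g : L' →+* L) (β : MvPolynomial (σ ⊕ σ) ℂ →+* L),
        (∀ p, g (α p) = β (φ p)) → ∀ p, g (ψ p) = β p := by
  obtain ⟨ψ, hψC, hψS, hψT, hψT'⟩ := exists_divided_hom ι α hunit
  refine ⟨ψ, ?_, ?_, ?_⟩
  · suffices hle : I ≤ RingHom.ker ψ from fun p hp => hle hp
    rw [hI, Ideal.span_le]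
    rintro p (⟨u, hu, hu0, rfl⟩ | ⟨ρ, hρ, rfl⟩)
    · have hmem : ∑ ρ : σ, C (u ρ) * X (Sum.inl ρ) * X (Sum.inr ρ) ∈ I' := by
        rw [hI']; exact Ideal.subset_span ⟨u, hu, rfl⟩
      change ψ _ = 0
      rw [← hαI _ hmem, map_sum, map_sum]
      refine Finset.sum_subset_zero_on_sdiff (Finset.subset_univ _) (fun ρ hρ => ?_) fun ρ _ => ?_
      · have : ρ ∉ Sig1 := by simpa using hρ
        simp [hu0 ρ this]
      · by_cases h : ι ρ = ρ
        · simp only [if_pos h, map_mul, hψC, hψS, hψT ρ h]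
        · simp only [if_neg h, map_mul, hψC, hψS, ← hψT' ρ h]
          ring
    · -- The relation `v ρ + v (ι ρ) = 0` puts `S_ρ T_ρ + S_{ι ρ} T_{ι ρ}` in `I'`.
      have hmem : X (Sum.inl ρ) * X (Sum.inr ρ) + X (Sum.inl (ι ρ)) * X (Sum.inr (ι ρ)) ∈ I' := by
        rw [hI']
        refine Ideal.subset_span ⟨Pi.single ρ 1 + Pi.single (ι ρ) 1, ?_, ?_⟩
        · simp [add_smul, Finset.sum_add_distrib, Pi.single_apply, hv ρ hρ]
        · simp [add_mul, Finset.sum_add_distrib, Pi.single_apply, apply_ite C]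
      have h0 := hαI _ hmem
      have hT' := hψT' (ι ρ) (by rw [hι ρ]; exact hρ.symm)
      rw [hι ρ] at hT'
      rw [map_add, map_mul, map_mul, ← hψT' ρ hρ, ← hT'] at h0
      change ψ _ = 0
      refine ((hunit ρ).mul (hunit (ι ρ))).mul_right_eq_zero.1 ?_
      rw [map_add, ← h0]
      ring
  · intro p
    suffices hc : ψ.comp (φ : MvPolynomial (σ ⊕ σ) ℂ →+* MvPolynomial (σ ⊕ σ) ℂ) = α from
      RingHom.congr_fun hc p
    refine MvPolynomial.ringHom_ext (fun a => ?_) (fun i => ?_)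
    · simp only [RingHom.comp_apply, RingHom.coe_coe, hφC, hψC]
    · rcases i with ρ | ρ
      · simp only [RingHom.comp_apply, RingHom.coe_coe, hφS, hψS]
      · simp only [RingHom.comp_apply, RingHom.coe_coe, hφT]
        split_ifs with h
        · exact hψT ρ h
        · rw [map_mul, hψS, hψT' ρ h]
  · intro L _ g β hg' p
    suffices hc : g.comp ψ = β from RingHom.congr_fun hc p
    refine MvPolynomial.ringHom_ext (fun a => ?_) (fun i => ?_)
    · rw [RingHom.comp_apply, hψC, hg', hφC]
    · rcases i with ρ | ρ
      · rw [RingHom.comp_apply, hψS, hg', hφS]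
      · rw [RingHom.comp_apply]
        by_cases h : ι ρ = ρ
        · rw [hψT ρ h, hg', hφT, if_pos h]
        · -- Cancel the unit `S_{ι ρ}` from both sides.
          have hu : IsUnit (β (X (Sum.inl (ι ρ)))) := by
            have := (hunit (ι ρ)).map g
            rwa [hg', hφS] at this
          refine hu.mul_left_cancel ?_
          have := congrArg g (hψT' ρ h)
          rw [map_mul, hg', hg', hφS, hφT, if_neg h, map_mul] at this
          exact this

/-- Algebraic form of the birationality assertion of Lemma 4.6 of the paper:
`φ(I′) ⊆ I`, the induced map `φ̄ : P/I′ → P/I` sends the class `s′` of `∏ S_ρ`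
to the class `s` of `∏ S_ρ`, and the induced map of localizations
`(P/I′)[1/s′] → (P/I)[1/s]` is bijective. -/
theorem stmt3 {σ : Type*} [Fintype σ] [DecidableEq σ]
    (ι : σ → σ) (hι : Function.Involutive ι)
    (Sig1 : Finset σ) (hSig : ∀ ρ : σ, ρ ∈ Sig1 ∨ ι ρ ∈ Sig1)
    {W : Type*} [AddCommGroup W] [Module ℂ W]
    (v : σ → W) (hv : ∀ ρ : σ, ι ρ ≠ ρ → v (ι ρ) = -v ρ)
    (I' I : Ideal (MvPolynomial (σ ⊕ σ) ℂ))
    (hI' : I' = Ideal.span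
      {p : MvPolynomial (σ ⊕ σ) ℂ |
        ∃ c : σ → ℂ, (∑ ρ : σ, c ρ • v ρ = 0) ∧
          p = ∑ ρ : σ, C (c ρ) * X (Sum.inl ρ) * X (Sum.inr ρ)})
    (hI : I = Ideal.span
      ({p : MvPolynomial (σ ⊕ σ) ℂ |
          ∃ u : σ → ℂ, (∑ ρ : σ, u ρ • v ρ = 0) ∧ (∀ ρ ∉ Sig1, u ρ = 0) ∧
            p = ∑ ρ ∈ Sig1,
              C (u ρ) *
                (if ι ρ = ρ then X (Sum.inl ρ)
                  else X (Sum.inl ρ) * X (Sum.inl (ι ρ))) * X (Sum.inr ρ)} ∪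
       {p : MvPolynomial (σ ⊕ σ) ℂ |
          ∃ ρ : σ, ι ρ ≠ ρ ∧ p = X (Sum.inr ρ) + X (Sum.inr (ι ρ))}))
    (φ : MvPolynomial (σ ⊕ σ) ℂ →ₐ[ℂ] MvPolynomial (σ ⊕ σ) ℂ)
    (hφ : φ = aeval (Sum.elim (fun ρ => X (Sum.inl ρ))
      (fun ρ => if ι ρ = ρ then X (Sum.inr ρ)
        else X (Sum.inl (ι ρ)) * X (Sum.inr ρ)))) :
    (∀ p ∈ I', φ p ∈ I) ∧
    Ideal.Quotient.mk I (φ (∏ ρ : σ, X (Sum.inl ρ))) =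
      Ideal.Quotient.mk I (∏ ρ : σ, X (Sum.inl ρ)) ∧
    ∃ g : Localization.Away (Ideal.Quotient.mk I' (∏ ρ : σ, X (Sum.inl ρ))) →+*
          Localization.Away (Ideal.Quotient.mk I (∏ ρ : σ, X (Sum.inl ρ))),
      (∀ p : MvPolynomial (σ ⊕ σ) ℂ,
        g (algebraMap (MvPolynomial (σ ⊕ σ) ℂ ⧸ I')
            (Localization.Away (Ideal.Quotient.mk I' (∏ ρ : σ, X (Sum.inl ρ))))
            (Ideal.Quotient.mk I' p)) =
          algebraMap (MvPolynomial (σ ⊕ σ) ℂ ⧸ I)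
            (Localization.Away (Ideal.Quotient.mk I (∏ ρ : σ, X (Sum.inl ρ))))
            (Ideal.Quotient.mk I (φ p))) ∧
      Function.Bijective g := by
  have hφS : ∀ ρ, φ (X (Sum.inl ρ)) = X (Sum.inl ρ) := fun ρ => by simp [hφ]
  have hφT : ∀ ρ, φ (X (Sum.inr ρ)) = if ι ρ = ρ then X (Sum.inr ρ)
      else X (Sum.inl (ι ρ)) * X (Sum.inr ρ) := fun ρ => by simp [hφ]
  have hφC : ∀ a, φ (C a) = C a := fun a => φ.commutes a
  have hs : φ (∏ ρ : σ, X (Sum.inl ρ)) = ∏ ρ : σ, X (Sum.inl ρ) := by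
    rw [map_prod]; exact Finset.prod_congr rfl fun ρ _ => hφS ρ
  have hsub : ∀ p ∈ I', φ p ∈ I :=
    map_mem ι hι Sig1 hSig v hv I' I hI' hI φ hφS hφT hφC
  refine ⟨hsub, by rw [hs], ?_⟩
  let L' := Localization.Away (Ideal.Quotient.mk I' (∏ ρ : σ, X (Sum.inl ρ)))
  let α : MvPolynomial (σ ⊕ σ) ℂ →+* L' :=
    (algebraMap (MvPolynomial (σ ⊕ σ) ℂ ⧸ I') L').comp (Ideal.Quotient.mk I')
  have hαI : ∀ p ∈ I', α p = 0 := fun p hp => by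
    simp [α, Ideal.Quotient.eq_zero_iff_mem.2 hp]
  have hunit : ∀ ρ, IsUnit (α (X (Sum.inl ρ))) := fun ρ => by
    refine isUnit_of_dvd_unit (map_dvd α (Finset.dvd_prod_of_mem
      (fun ρ => X (Sum.inl ρ)) (Finset.mem_univ ρ))) ?_
    exact IsLocalization.Away.algebraMap_isUnit
      (S := L') (Ideal.Quotient.mk I' (∏ ρ : σ, X (Sum.inl ρ)))
  obtain ⟨ψ, hψI, hψφ, hψg⟩ := exists_inverse_hom ι hι Sig1 v hv I' I hI' hI φ hφS hφT hφC
    α hαI hunit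
  exact exists_bijective_away I' I _ (φ : MvPolynomial (σ ⊕ σ) ℂ →+* MvPolynomial (σ ⊕ σ) ℂ)
    hsub hs ψ hψI hψφ fun g hg => hψg g ((algebraMap _ _).comp (Ideal.Quotient.mk I)) hg
end

section
/- There exists a ℂ-algebra isomorphism between the ℂ-subalgebra of Q′ spanned by the classes of all monomials of weight (0,0) and the quotient ring ℂ[z_{ij} : 1 ≤ i, j ≤ n+1]/J, where J is the ideal generated by Σ_{i=1}^{n+1} z_{ii} together with all 2×2 minors M_{ij}·M_{kl} − M_{il}·M_{kj} (1 ≤ i, j, k, l ≤ n+1) of the (n+1)×(n+1) matrix M whose entries are M_{ij} = z_{ij} for (i,j) ≠ (n+1, n+1) and M_{n+1,n+1} = −z_{n+1,n+1}². (Paper's explicit presentation of the symplectic singularity Z_X ≅ 𝒴(A,0,0) for X the blow-up of ℙⁿ at a point.) -/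
/-! Write `a = x_{n+1}`, `b = x_{n+2}`, `c = y_{n+1}`, `d = y_{n+2}`. The isomorphism comes from
`φ : ℂ[z] / J → Q′` sending `z_{ij}` to `u_i v_j`, where `u = (x₁, …, x_n, ad)` and
`v = (y₁, …, y_n, bc)`, except that `z_{n+1,n+1}` goes to `ac`. It is well defined because
`f₁ = 0` is the trace relation and `f₁ + f₂ = 0` reads `bd = -ac`, whence
`u_{n+1} v_{n+1} = (ac)(bd) = -(ac)²`.

Every monomial of weight zero is a product of equally many `u_i` and `v_j`, times powers of `ac`
and `bd`: if it has more `xᵢ` than `yᵢ`, the weight condition forces enough factors `bc` to make up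
the difference, and `ad` in the opposite case. Matching the `u_i` with the `v_j` gives an element
`val` of `ℂ[z] / J` mapping to it under `φ` (`phi_val`), so the image of `φ` is the weight-zero part
(`range_phi`).

For injectivity, `val` does not depend on the matching, because the `2 × 2` minors of `M` vanish,
and it is multiplicative on weight-zero monomials (`val_add`). Extended by zero to the other
weights, it gives a linear map `psi` on `ℂ[x, y]` with `psi (f * m) = psi f * val m` for `m` of
weight zero. Since `f₁` and `f₂` are homogeneous of weight zero and `psi` sends them to plus or
minus the trace, `psi` kills the ideal `(f₁, f₂)`; and `psi ∘ φ` is the identity on the `z_{ij}`,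
hence everywhere (`psi_phi0`). -/

open scoped BigOperators
open MvPolynomial

noncomputable section

/-- Embedding of the first `n` indices into `Fin (n+2)` (the variables `x₁,…,x_n`). -/
def emb (n : ℕ) (i : Fin n) : Fin (n + 2) := Fin.castLE (by omega) i

/-- The index of `x_{n+1}`. -/
def idxA (n : ℕ) : Fin (n + 2) := ⟨n, by omega⟩

/-- The index of `x_{n+2}`. -/
def idxB (n : ℕ) : Fin (n + 2) := ⟨n + 1, by omega⟩

/-- `f₁ = Σ_{i=1}^n xᵢyᵢ + x_{n+1}y_{n+1}`. -/
def f1 (n : ℕ) : MvPolynomial (Fin (n + 2) ⊕ Fin (n + 2)) ℂ :=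
  (∑ i : Fin n, X (Sum.inl (emb n i)) * X (Sum.inr (emb n i))) +
    X (Sum.inl (idxA n)) * X (Sum.inr (idxA n))

/-- `f₂ = −Σ_{i=1}^n xᵢyᵢ + x_{n+2}y_{n+2}`. -/
def f2 (n : ℕ) : MvPolynomial (Fin (n + 2) ⊕ Fin (n + 2)) ℂ :=
  (-∑ i : Fin n, X (Sum.inl (emb n i)) * X (Sum.inr (emb n i))) +
    X (Sum.inl (idxB n)) * X (Sum.inr (idxB n))

/-- The ideal `(f₁, f₂)` cutting out the zero fibre of the moment map. -/
def momIdeal (n : ℕ) : Ideal (MvPolynomial (Fin (n + 2) ⊕ Fin (n + 2)) ℂ) :=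
  Ideal.span {f1 n, f2 n}

/-- The `ℤ²`-weight of the variable `xᵢ` under the `𝕋²`-action. -/
def wtx (n : ℕ) (i : Fin (n + 2)) : ℤ × ℤ :=
  if (i : ℕ) < n then (1, -1) else if (i : ℕ) = n then (1, 0) else (0, 1)

/-- The `ℤ²`-weight of the monomial with exponent vector `e`. -/
def mwt (n : ℕ) (e : Fin (n + 2) ⊕ Fin (n + 2) → ℕ) : ℤ × ℤ :=
  (∑ i : Fin (n + 2), (e (Sum.inl i) : ℤ) • wtx n i) -
    ∑ i : Fin (n + 2), (e (Sum.inr i) : ℤ) • wtx n i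

/-- The entries of the matrix `M`: `M_{ij} = z_{ij}` except `M_{n+1,n+1} = −z_{n+1,n+1}²`. -/
def Mentry (n : ℕ) (p : Fin (n + 1) × Fin (n + 1)) :
    MvPolynomial (Fin (n + 1) × Fin (n + 1)) ℂ :=
  if p = (Fin.last n, Fin.last n) then -(X (Fin.last n, Fin.last n)) ^ 2 else X p

/-- The ideal generated by the trace and the `2×2` minors of `M`. -/
def Jideal (n : ℕ) : Ideal (MvPolynomial (Fin (n + 1) × Fin (n + 1)) ℂ) :=
  Ideal.span
    ({∑ i : Fin (n + 1), X (i, i)} ∪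
     {q : MvPolynomial (Fin (n + 1) × Fin (n + 1)) ℂ |
        ∃ i j k l : Fin (n + 1),
          q = Mentry n (i, j) * Mentry n (k, l) - Mentry n (i, l) * Mentry n (k, j)})

/-! ### Products along a pairing of two multisets -/

/-- For multisets `s`, `t` of equal size, the product of `M i j` over a pairing of the elements
`i` of `s` with the elements `j` of `t`. The pairing is the one given by arbitrary enumerations;
it does not matter when `M` has vanishing `2 × 2` minors. -/
def pairProd {I R : Type*} [CommRing R] (M : I → I → R) (s t : Multiset I) : R :=
  (List.zipWith M s.toList t.toList).prod

lemma zipWith_prod_perm_right {I R : Type*} [CommRing R] (M : I → I → R)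
    (hM : ∀ i j k l, M i j * M k l = M i l * M k j) {k₁ k₂ : List I} (h : k₁.Perm k₂) :
    ∀ l : List I, l.length = k₁.length →
      (List.zipWith M l k₁).prod = (List.zipWith M l k₂).prod := by
  induction h with
  | nil => intro l _; rfl
  | cons x _ ih =>
    intro l hl
    cases l with
    | nil => simp
    | cons a l => simp only [List.length_cons, Nat.add_right_cancel_iff] at hl; simp [ih l hl]
  | swap x y k =>
    intro l hl
    match l, hl with
    | a :: b :: l, _ =>
      simp only [List.zipWith_cons_cons, List.prod_cons, ← mul_assoc]
      rw [hM]
  | trans h₁ _ ih₁ ih₂ =>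
    intro l hl
    rw [ih₁ l hl, ih₂ l (hl.trans h₁.length_eq)]

lemma zipWith_prod_perm {I R : Type*} [CommRing R] (M : I → I → R)
    (hM : ∀ i j k l, M i j * M k l = M i l * M k j) {k₁ k₂ l₁ l₂ : List I}
    (h : k₁.Perm k₂) (h' : l₁.Perm l₂) (hl : l₁.length = k₁.length) :
    (List.zipWith M l₁ k₁).prod = (List.zipWith M l₂ k₂).prod := by
  rw [zipWith_prod_perm_right M hM h l₁ hl, List.zipWith_comm, List.zipWith_comm (as := l₂)]
  refine zipWith_prod_perm_right (fun b a => M a b) (fun i j k l => ?_) h' _ ?_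
  · rw [hM, mul_comm]
  · rw [hl, h.length_eq]

section pair
variable {I R : Type*} [CommRing R] (M : I → I → R)

lemma pairProd_zero : pairProd M 0 0 = 1 := by simp [pairProd]

lemma pairProd_single (i j : I) : pairProd M {i} {j} = M i j := by simp [pairProd]

lemma pairProd_add (hM : ∀ i j k l, M i j * M k l = M i l * M k j) {s t s' t' : Multiset I}
    (h : Multiset.card s = Multiset.card t) (h' : Multiset.card s' = Multiset.card t') :
    pairProd M (s + s') (t + t') = pairProd M s t * pairProd M s' t' := by
  unfold pairProd
  rw [← List.prod_append, ← List.zipWith_append (by simpa using h)]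
  apply zipWith_prod_perm M hM
  · rw [← Multiset.coe_eq_coe, ← Multiset.coe_add]; simp
  · rw [← Multiset.coe_eq_coe, ← Multiset.coe_add]; simp
  · simp [h, h']

lemma pairProd_nsmul (hM : ∀ i j k l, M i j * M k l = M i l * M k j) (i j : I) (r : ℕ) :
    pairProd M (r • {i}) (r • {j}) = M i j ^ r := by
  induction r with
  | zero => simp [pairProd_zero]
  | succ r ih =>
    rw [succ_nsmul, succ_nsmul, pairProd_add M hM (by simp) (by simp), ih, pairProd_single,
      pow_succ]

/-- If `M` is the outer product of `U` and `V`, the paired product separates. -/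
lemma map_pairProd {S : Type*} [CommRing S] (g : R →+* S) (U V : I → S)
    (hUV : ∀ i j, g (M i j) = U i * V j) {s t : Multiset I}
    (h : Multiset.card s = Multiset.card t) :
    g (pairProd M s t) = (s.map U).prod * (t.map V).prod := by
  have key : ∀ l k : List I, l.length = k.length →
      g (List.zipWith M l k).prod = (l.map U).prod * (k.map V).prod := by
    intro l
    induction l with
    | nil => intro k hk; cases k <;> simp_all
    | cons a l ih =>
      intro k hk
      cases k with
      | nil => simp at hk
      | cons b k =>
        simp only [List.length_cons, Nat.add_right_cancel_iff] at hk
        simp only [List.zipWith_cons_cons, List.prod_cons, map_mul, ih k hk, hUV, List.map_cons]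
        ring
  have := key s.toList t.toList (by simpa using h)
  rw [pairProd, this, ← Multiset.prod_coe, ← Multiset.prod_coe, ← Multiset.map_coe,
    ← Multiset.map_coe, Multiset.coe_toList, Multiset.coe_toList]
end pair

/-! ### Exponent vectors and weights -/

/-- Exponent vectors of monomials in the `xᵢ` (`Sum.inl`) and `yᵢ` (`Sum.inr`). -/
abbrev Expo (n : ℕ) := Fin (n + 2) ⊕ Fin (n + 2) →₀ ℕ

lemma emb_inj (n : ℕ) {i j : Fin n} : emb n i = emb n j ↔ i = j := by
  simp [emb, Fin.ext_iff]

lemma emb_ne_A (n : ℕ) (i : Fin n) : emb n i ≠ idxA n := by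
  have := i.2; simp [emb, idxA, Fin.ext_iff]; omega

lemma emb_ne_B (n : ℕ) (i : Fin n) : emb n i ≠ idxB n := by
  have := i.2; simp [emb, idxB, Fin.ext_iff]; omega

lemma A_ne_B (n : ℕ) : idxA n ≠ idxB n := by
  simp [idxA, idxB, Fin.ext_iff]

lemma sum_fin_two {N : Type*} [AddCommMonoid N] (n : ℕ) (g : Fin (n + 2) → N) :
    ∑ i, g i = ∑ i : Fin n, g (emb n i) + g (idxA n) + g (idxB n) := by
  rw [Fin.sum_univ_castSucc, Fin.sum_univ_castSucc]; rfl

lemma prod_fin_two {N : Type*} [CommMonoid N] (n : ℕ) (g : Fin (n + 2) → N) :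
    ∏ i, g i = (∏ i : Fin n, g (emb n i)) * g (idxA n) * g (idxB n) := by
  rw [Fin.prod_univ_castSucc, Fin.prod_univ_castSucc]; rfl

/-- The multiset of indices of the factors `x₁, …, x_n` of a monomial. -/
def xs (n : ℕ) (e : Expo n) : Multiset (Fin (n + 1)) :=
  ∑ i : Fin n, e (Sum.inl (emb n i)) • {i.castSucc}

/-- The multiset of indices of the factors `y₁, …, y_n` of a monomial. -/
def ys (n : ℕ) (e : Expo n) : Multiset (Fin (n + 1)) :=
  ∑ i : Fin n, e (Sum.inr (emb n i)) • {i.castSucc}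

lemma xs_add (n : ℕ) (e e' : Expo n) : xs n (e + e') = xs n e + xs n e' := by
  simp [xs, add_nsmul, Finset.sum_add_distrib]

lemma ys_add (n : ℕ) (e e' : Expo n) : ys n (e + e') = ys n e + ys n e' := by
  simp [ys, add_nsmul, Finset.sum_add_distrib]

lemma card_xs (n : ℕ) (e : Expo n) :
    Multiset.card (xs n e) = ∑ i : Fin n, e (Sum.inl (emb n i)) := by
  simp [xs]

lemma card_ys (n : ℕ) (e : Expo n) :
    Multiset.card (ys n e) = ∑ i : Fin n, e (Sum.inr (emb n i)) := by
  simp [ys]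

lemma wtx_emb (n : ℕ) (i : Fin n) : wtx n (emb n i) = (1, -1) := by simp [wtx, emb]
lemma wtx_A (n : ℕ) : wtx n (idxA n) = (1, 0) := by simp [wtx, idxA]
lemma wtx_B (n : ℕ) : wtx n (idxB n) = (0, 1) := by simp [wtx, idxB]

lemma mwt_eq_zero_iff (n : ℕ) (e : Expo n) :
    mwt n e = 0 ↔
      Multiset.card (xs n e) + e (Sum.inl (idxA n)) =
          Multiset.card (ys n e) + e (Sum.inr (idxA n)) ∧
      Multiset.card (xs n e) + e (Sum.inr (idxB n)) =
          Multiset.card (ys n e) + e (Sum.inl (idxB n)) := by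
  rw [card_xs, card_ys, mwt, sum_fin_two, sum_fin_two]
  simp only [wtx_emb, wtx_A, wtx_B, ← Finset.sum_smul, ← Nat.cast_sum]
  simp only [Prod.ext_iff, Prod.fst_sub, Prod.snd_sub, Prod.fst_add, Prod.snd_add, Prod.smul_mk,
    Prod.fst_zero, Prod.snd_zero, smul_eq_mul]
  omega

lemma mwt_add (n : ℕ) (e e' : Expo n) : mwt n ⇑(e + e') = mwt n e + mwt n e' := by
  simp only [mwt, Finsupp.coe_add, Pi.add_apply, Nat.cast_add, add_smul, Finset.sum_add_distrib]
  abel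

/-! ### The map from weight-zero monomials to the quotient by `J` -/

/-- The quotient ring `ℂ[z] / J`. -/
abbrev RJ (n : ℕ) := MvPolynomial (Fin (n + 1) × Fin (n + 1)) ℂ ⧸ Jideal n

/-- The class of `z_{n+1,n+1}` in `ℂ[z] / J`. -/
def zl (n : ℕ) : RJ n := Ideal.Quotient.mk _ (X (Fin.last n, Fin.last n))

/-- The matrix `M` with entries reduced modulo `J`. -/
def Mb (n : ℕ) (i j : Fin (n + 1)) : RJ n := Ideal.Quotient.mk _ (Mentry n (i, j))

lemma Mb_minor (n : ℕ) (i j k l : Fin (n + 1)) :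
    Mb n i j * Mb n k l = Mb n i l * Mb n k j := by
  unfold Mb
  rw [← map_mul, ← map_mul, Ideal.Quotient.eq]
  exact Ideal.subset_span (Or.inr ⟨i, j, k, l, rfl⟩)

lemma Mb_last (n : ℕ) : Mb n (Fin.last n) (Fin.last n) = zl n * (-zl n) := by
  rw [Mb, Mentry, if_pos rfl, map_neg, map_pow, zl]
  ring

lemma Mb_of_ne (n : ℕ) {i j : Fin (n + 1)} (h : (i, j) ≠ (Fin.last n, Fin.last n)) :
    Mb n i j = Ideal.Quotient.mk _ (X (i, j)) := by
  rw [Mb, Mentry, if_neg h]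

lemma trace_zero (n : ℕ) :
    ∑ i : Fin n, Mb n i.castSucc i.castSucc + zl n = 0 := by
  have h : (Ideal.Quotient.mk (Jideal n)) (∑ i : Fin (n + 1), X (i, i)) = 0 :=
    Ideal.Quotient.eq_zero_iff_mem.2 (Ideal.subset_span (Or.inl rfl))
  rw [Fin.sum_univ_castSucc, map_add, map_sum] at h
  rw [← h, zl]
  congr 1
  refine Finset.sum_congr rfl fun i _ => Mb_of_ne n ?_
  simp [(Fin.castSucc_lt_last i).ne]

/-- The multiset of row indices of a monomial `x^α a^k b^l y^β c^m d^p` of weight zero: when there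
are fewer `xᵢ` than `yᵢ`, the missing rows are supplied by factors `a d`. -/
def rowsOf (n : ℕ) (e : Expo n) : Multiset (Fin (n + 1)) :=
  xs n e + (Multiset.card (ys n e) - Multiset.card (xs n e)) • {Fin.last n}

/-- The multiset of column indices, completed by factors `b c`. -/
def colsOf (n : ℕ) (e : Expo n) : Multiset (Fin (n + 1)) :=
  ys n e + (Multiset.card (xs n e) - Multiset.card (ys n e)) • {Fin.last n}

lemma card_rows (n : ℕ) (e : Expo n) :
    Multiset.card (rowsOf n e) = Multiset.card (colsOf n e) := by
  simp only [rowsOf, colsOf, Multiset.card_add, Multiset.card_nsmul, Multiset.card_singleton]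
  omega

/-- The element of `ℂ[z] / J` attached to a monomial of weight zero. The factors `a c` and `b d`
left over after completing rows and columns contribute `z_{n+1,n+1}` and `-z_{n+1,n+1}`; the
truncated subtractions in the exponents are exact in weight zero. -/
def val (n : ℕ) (e : Expo n) : RJ n :=
  pairProd (Mb n) (rowsOf n e) (colsOf n e) *
    zl n ^ (e (Sum.inl (idxA n)) - (Multiset.card (ys n e) - Multiset.card (xs n e))) *
    (-zl n) ^ (e (Sum.inl (idxB n)) - (Multiset.card (xs n e) - Multiset.card (ys n e)))

/-- Multiplicativity of `val`: completions of opposite sign create pairs `(n+1, n+1)`, absorbed by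
`M_{n+1,n+1} = z_{n+1,n+1} * (-z_{n+1,n+1})`, which is the relation `(ad)(bc) = (ac)(bd)`. -/
lemma val_add (n : ℕ) (e e' : Expo n) (h : mwt n e = 0) (h' : mwt n e' = 0) :
    val n (e + e') = val n e * val n e' := by
  rw [mwt_eq_zero_iff] at h h'
  obtain ⟨s, hs⟩ : ∃ s, (Multiset.card (ys n e) - Multiset.card (xs n e)) +
      (Multiset.card (ys n e') - Multiset.card (xs n e')) =
      (Multiset.card (ys n (e + e')) - Multiset.card (xs n (e + e'))) + s := by
    refine Nat.exists_eq_add_of_le ?_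
    simp only [ys_add, xs_add, Multiset.card_add]; omega
  have hs' : (Multiset.card (xs n e) - Multiset.card (ys n e)) +
      (Multiset.card (xs n e') - Multiset.card (ys n e')) =
      (Multiset.card (xs n (e + e')) - Multiset.card (ys n (e + e'))) + s := by
    simp only [ys_add, xs_add, Multiset.card_add] at hs ⊢; omega
  have hr : rowsOf n e + rowsOf n e' = rowsOf n (e + e') + s • {Fin.last n} := by
    simp only [rowsOf]
    rw [add_assoc (xs n (e + e')), ← add_nsmul, ← hs, add_nsmul, xs_add]
    abel
  have hc : colsOf n e + colsOf n e' = colsOf n (e + e') + s • {Fin.last n} := by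
    simp only [colsOf]
    rw [add_assoc (ys n (e + e')), ← add_nsmul, ← hs', add_nsmul, ys_add]
    abel
  have hp : pairProd (Mb n) (rowsOf n e) (colsOf n e) *
      pairProd (Mb n) (rowsOf n e') (colsOf n e') =
      pairProd (Mb n) (rowsOf n (e + e')) (colsOf n (e + e')) * (zl n * (-zl n)) ^ s := by
    rw [← pairProd_add _ (Mb_minor n) (card_rows n e) (card_rows n e'), hr, hc,
      pairProd_add _ (Mb_minor n) (card_rows n _) (by simp), pairProd_nsmul _ (Mb_minor n),
      Mb_last]
  have hA : (e + e') (Sum.inl (idxA n)) -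
      (Multiset.card (ys n (e + e')) - Multiset.card (xs n (e + e'))) =
      s + (e (Sum.inl (idxA n)) - (Multiset.card (ys n e) - Multiset.card (xs n e))) +
      (e' (Sum.inl (idxA n)) - (Multiset.card (ys n e') - Multiset.card (xs n e'))) := by
    rw [Finsupp.add_apply]; omega
  have hB : (e + e') (Sum.inl (idxB n)) -
      (Multiset.card (xs n (e + e')) - Multiset.card (ys n (e + e'))) =
      s + (e (Sum.inl (idxB n)) - (Multiset.card (xs n e) - Multiset.card (ys n e))) +
      (e' (Sum.inl (idxB n)) - (Multiset.card (xs n e') - Multiset.card (ys n e'))) := by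
    rw [Finsupp.add_apply]; omega
  have hv : val n e * val n e' = (pairProd (Mb n) (rowsOf n e) (colsOf n e) *
      pairProd (Mb n) (rowsOf n e') (colsOf n e')) *
      (zl n ^ (e (Sum.inl (idxA n)) - (Multiset.card (ys n e) - Multiset.card (xs n e))) *
      zl n ^ (e' (Sum.inl (idxA n)) - (Multiset.card (ys n e') - Multiset.card (xs n e')))) *
      ((-zl n) ^ (e (Sum.inl (idxB n)) - (Multiset.card (xs n e) - Multiset.card (ys n e))) *
      (-zl n) ^ (e' (Sum.inl (idxB n)) -
        (Multiset.card (xs n e') - Multiset.card (ys n e')))) := by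
    unfold val
    ac_rfl
  rw [hv, hp, val, hA, hB, mul_pow]
  generalize -zl n = w
  ring

/-- The linear extension of `val`, with value `0` on monomials of nonzero weight. -/
def psi (n : ℕ) : MvPolynomial (Fin (n + 2) ⊕ Fin (n + 2)) ℂ →ₗ[ℂ] RJ n :=
  (MvPolynomial.basisMonomials _ ℂ).constr ℂ
    (fun e : Expo n => if mwt n e = 0 then val n e else 0)

lemma psi_monomial (n : ℕ) (e : Expo n) :
    psi n (monomial e 1) = if mwt n e = 0 then val n e else 0 := by
  have := (MvPolynomial.basisMonomials (Fin (n + 2) ⊕ Fin (n + 2)) ℂ).constr_basis ℂ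
    (fun e : Expo n => if mwt n e = 0 then val n e else 0) e
  simpa [psi] using this

lemma psi_mul_monomial (n : ℕ) (f : MvPolynomial (Fin (n + 2) ⊕ Fin (n + 2)) ℂ) (e : Expo n)
    (he : mwt n e = 0) : psi n (f * monomial e 1) = psi n f * val n e := by
  induction f using MvPolynomial.induction_on' with
  | add p q hp hq => rw [add_mul, map_add, map_add, hp, hq, add_mul]
  | monomial u a =>
    have h1 : (monomial u a : MvPolynomial (Fin (n + 2) ⊕ Fin (n + 2)) ℂ) =
        a • monomial u 1 := by rw [smul_monomial, smul_eq_mul, mul_one]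
    rw [h1, smul_mul_assoc, map_smul, map_smul, smul_mul_assoc, monomial_mul, mul_one,
      psi_monomial, psi_monomial, mwt_add, he, add_zero]
    split_ifs with hu
    · rw [val_add n u e hu he]
    · rw [zero_mul]

/-! ### The generators of the weight-zero part -/

/-- The exponent vector of the row factor: `xᵢ` for `i ≤ n`, and `a d` for the last row. -/
def uexp (n : ℕ) : Fin (n + 1) → Expo n :=
  Fin.lastCases (Finsupp.single (Sum.inl (idxA n)) 1 + Finsupp.single (Sum.inr (idxB n)) 1)
    (fun i => Finsupp.single (Sum.inl (emb n i)) 1)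

/-- The exponent vector of the column factor: `yⱼ` for `j ≤ n`, and `b c` for the last column. -/
def vexp (n : ℕ) : Fin (n + 1) → Expo n :=
  Fin.lastCases (Finsupp.single (Sum.inl (idxB n)) 1 + Finsupp.single (Sum.inr (idxA n)) 1)
    (fun i => Finsupp.single (Sum.inr (emb n i)) 1)

/-- The exponent vector of the monomial to which `z_{ij}` is sent: the product of a row and a
column factor, except that `z_{n+1,n+1}` is sent to `a c`. -/
def gexp (n : ℕ) (p : Fin (n + 1) × Fin (n + 1)) : Expo n :=
  if p = (Fin.last n, Fin.last n) then
    Finsupp.single (Sum.inl (idxA n)) 1 + Finsupp.single (Sum.inr (idxA n)) 1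
  else uexp n p.1 + vexp n p.2

lemma xs_inr (n : ℕ) (i : Fin (n + 2)) : xs n (Finsupp.single (Sum.inr i) 1) = 0 := by
  simp [xs]
lemma ys_inl (n : ℕ) (i : Fin (n + 2)) : ys n (Finsupp.single (Sum.inl i) 1) = 0 := by
  simp [ys]
lemma xs_A (n : ℕ) : xs n (Finsupp.single (Sum.inl (idxA n)) 1) = 0 := by
  simp [xs, (emb_ne_A n _).symm]
lemma xs_B (n : ℕ) : xs n (Finsupp.single (Sum.inl (idxB n)) 1) = 0 := by
  simp [xs, (emb_ne_B n _).symm]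
lemma ys_A (n : ℕ) : ys n (Finsupp.single (Sum.inr (idxA n)) 1) = 0 := by
  simp [ys, (emb_ne_A n _).symm]
lemma ys_B (n : ℕ) : ys n (Finsupp.single (Sum.inr (idxB n)) 1) = 0 := by
  simp [ys, (emb_ne_B n _).symm]
lemma xs_emb (n : ℕ) (i : Fin n) :
    xs n (Finsupp.single (Sum.inl (emb n i)) 1) = {i.castSucc} := by
  simp [xs, Finsupp.single_apply, emb_inj, ite_smul]
lemma ys_emb (n : ℕ) (i : Fin n) :
    ys n (Finsupp.single (Sum.inr (emb n i)) 1) = {i.castSucc} := by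
  simp [ys, Finsupp.single_apply, emb_inj, ite_smul]

/-- The exponent vector of `b d`. -/
def bdexp (n : ℕ) : Expo n :=
  Finsupp.single (Sum.inl (idxB n)) 1 + Finsupp.single (Sum.inr (idxB n)) 1

lemma bdexp_spec (n : ℕ) : mwt n (bdexp n) = 0 ∧ val n (bdexp n) = -zl n := by
  rw [mwt_eq_zero_iff]
  simp [val, rowsOf, colsOf, bdexp, xs_add, ys_add, xs_inr, ys_inl, xs_B, ys_B,
    A_ne_B, pairProd_zero]

lemma gexp_spec (n : ℕ) (p : Fin (n + 1) × Fin (n + 1)) :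
    mwt n (gexp n p) = 0 ∧ val n (gexp n p) = Ideal.Quotient.mk _ (X p) := by
  rw [mwt_eq_zero_iff]
  obtain ⟨i, j⟩ := p
  have hl : ∀ i : Fin n, i.castSucc ≠ Fin.last n := fun i => (Fin.castSucc_lt_last i).ne
  induction i using Fin.lastCases with
  | last =>
    induction j using Fin.lastCases with
    | last =>
      simp [val, rowsOf, colsOf, gexp, xs_add, ys_add, xs_inr, ys_inl, xs_A, ys_A,
        A_ne_B, pairProd_zero, zl]
    | cast j =>
      rw [← Mb_of_ne n (by simp [hl])]
      simp [val, rowsOf, colsOf, gexp, uexp, vexp, xs_add, ys_add, xs_inr, ys_inl, xs_A,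
        ys_B, ys_emb, hl, A_ne_B, (A_ne_B n).symm, pairProd_single,
        emb_ne_A, emb_ne_B]
  | cast i =>
    induction j using Fin.lastCases with
    | last =>
      rw [← Mb_of_ne n (by simp [hl])]
      simp [val, rowsOf, colsOf, gexp, uexp, vexp, xs_add, ys_add, xs_inr, ys_inl, xs_B, ys_A,
        xs_emb, hl, A_ne_B, (A_ne_B n).symm, pairProd_single,
        emb_ne_A, emb_ne_B]
    | cast j =>
      rw [← Mb_of_ne n (by simp [hl])]
      simp [val, rowsOf, colsOf, gexp, uexp, vexp, xs_add, ys_add, xs_inr, ys_inl,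
        xs_emb, ys_emb, hl, pairProd_single, emb_ne_A, emb_ne_B]

/-! ### The map from the quotient by `J` to `Q′` and its left inverse -/

/-- The coordinate ring `Q′` of the zero fibre. -/
abbrev QM (n : ℕ) := MvPolynomial (Fin (n + 2) ⊕ Fin (n + 2)) ℂ ⧸ momIdeal n

/-- The homomorphism sending each `z_{ij}` to the corresponding weight-zero monomial. -/
def phi0 (n : ℕ) : MvPolynomial (Fin (n + 1) × Fin (n + 1)) ℂ →ₐ[ℂ]
    MvPolynomial (Fin (n + 2) ⊕ Fin (n + 2)) ℂ :=
  aeval (fun p => monomial (gexp n p) 1)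

lemma X_mul_X {σ : Type*} (u v : σ) :
    (X u * X v : MvPolynomial σ ℂ) = monomial (Finsupp.single u 1 + Finsupp.single v 1) 1 := by
  simp [X, monomial_mul]

lemma gexp_diag (n : ℕ) (i : Fin n) :
    (monomial (gexp n (i.castSucc, i.castSucc)) 1 : MvPolynomial _ ℂ) =
      X (Sum.inl (emb n i)) * X (Sum.inr (emb n i)) := by
  rw [X_mul_X, gexp, if_neg (by simp [(Fin.castSucc_lt_last i).ne])]
  simp [uexp, vexp]

lemma gexp_last (n : ℕ) :
    (monomial (gexp n (Fin.last n, Fin.last n)) 1 : MvPolynomial _ ℂ) =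
      X (Sum.inl (idxA n)) * X (Sum.inr (idxA n)) := by
  rw [X_mul_X, gexp, if_pos rfl]

lemma mk_f1 (n : ℕ) : (Ideal.Quotient.mk (momIdeal n)) (f1 n) = 0 :=
  Ideal.Quotient.eq_zero_iff_mem.2 (Ideal.subset_span (by simp))

lemma mk_f2 (n : ℕ) : (Ideal.Quotient.mk (momIdeal n)) (f2 n) = 0 :=
  Ideal.Quotient.eq_zero_iff_mem.2 (Ideal.subset_span (by simp))

/-- The class of `-a c` is that of `b d`. -/
lemma mk_bd (n : ℕ) : -(Ideal.Quotient.mk (momIdeal n))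
      (X (Sum.inl (idxA n)) * X (Sum.inr (idxA n))) =
    (Ideal.Quotient.mk (momIdeal n)) (X (Sum.inl (idxB n)) * X (Sum.inr (idxB n))) := by
  have h : (Ideal.Quotient.mk (momIdeal n)) (f1 n + f2 n) = 0 := by
    rw [map_add, mk_f1, mk_f2, add_zero]
  have h' : f1 n + f2 n = X (Sum.inl (idxB n)) * X (Sum.inr (idxB n)) +
      X (Sum.inl (idxA n)) * X (Sum.inr (idxA n)) := by
    unfold f1 f2; ring
  rw [h', map_add] at h
  exact (eq_neg_of_add_eq_zero_left h).symm

/-- The class in `Q′` of a row factor. -/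
def Uq (n : ℕ) (i : Fin (n + 1)) : QM n := Ideal.Quotient.mk _ (monomial (uexp n i) 1)

/-- The class in `Q′` of a column factor. -/
def Vq (n : ℕ) (i : Fin (n + 1)) : QM n := Ideal.Quotient.mk _ (monomial (vexp n i) 1)

lemma mk_phi0_Mentry (n : ℕ) (i j : Fin (n + 1)) :
    (Ideal.Quotient.mk (momIdeal n)) (phi0 n (Mentry n (i, j))) = Uq n i * Vq n j := by
  unfold Mentry
  split_ifs with h
  · obtain ⟨rfl, rfl⟩ := Prod.mk.inj h
    have hU : Uq n (Fin.last n) * Vq n (Fin.last n) =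
        (Ideal.Quotient.mk (momIdeal n)) (X (Sum.inl (idxA n)) * X (Sum.inr (idxA n))) *
        (Ideal.Quotient.mk (momIdeal n)) (X (Sum.inl (idxB n)) * X (Sum.inr (idxB n))) := by
      simp only [Uq, Vq, uexp, vexp, Fin.lastCases_last, ← X_mul_X, map_mul]
      ring
    rw [hU, ← mk_bd, phi0, map_neg, map_pow, aeval_X, gexp_last, map_neg, map_pow]
    ring
  · rw [phi0, aeval_X, gexp, if_neg h, Uq, Vq, ← map_mul, monomial_mul, mul_one]

/-- The homomorphism `ℂ[z] / J → Q′`. -/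
def phi (n : ℕ) : RJ n →ₐ[ℂ] QM n :=
  Ideal.Quotient.liftₐ (Jideal n) ((Ideal.Quotient.mkₐ ℂ (momIdeal n)).comp (phi0 n)) (by
    intro a ha
    rw [← RingHom.mem_ker]
    revert a
    change Jideal n ≤ _
    rw [Jideal, Ideal.span_le]
    rintro q (rfl | ⟨i, j, k, l, rfl⟩)
    · rw [SetLike.mem_coe, RingHom.mem_ker]
      have : phi0 n (∑ i : Fin (n + 1), X (i, i)) = f1 n := by
        rw [Fin.sum_univ_castSucc, map_add, map_sum]
        simp only [phi0, aeval_X, gexp_diag, gexp_last, f1]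
      change (Ideal.Quotient.mk (momIdeal n)) (phi0 n (∑ i : Fin (n + 1), X (i, i))) = 0
      rw [this, mk_f1]
    · rw [SetLike.mem_coe, RingHom.mem_ker]
      change (Ideal.Quotient.mk (momIdeal n)) (phi0 n _) = 0
      rw [map_sub, map_sub, map_mul, map_mul, map_mul, map_mul]
      simp only [mk_phi0_Mentry]
      ring)

lemma phi_mk (n : ℕ) (f : MvPolynomial (Fin (n + 1) × Fin (n + 1)) ℂ) :
    phi n (Ideal.Quotient.mk _ f) = Ideal.Quotient.mk _ (phi0 n f) := rfl

lemma psi_mul_f1 (n : ℕ) (g : MvPolynomial (Fin (n + 2) ⊕ Fin (n + 2)) ℂ) :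
    psi n (g * f1 n) = 0 := by
  have h : ∀ i : Fin n, Mb n i.castSucc i.castSucc = val n (gexp n (i.castSucc, i.castSucc)) :=
    fun i => by
      rw [(gexp_spec n _).2, Mb_of_ne n]
      simp [(Fin.castSucc_lt_last i).ne]
  have ht := trace_zero n
  rw [zl, ← (gexp_spec n _).2] at ht
  simp only [h] at ht
  rw [f1, ← gexp_last]
  simp only [← gexp_diag]
  rw [mul_add, Finset.mul_sum, map_add, map_sum]
  simp only [psi_mul_monomial n g _ (gexp_spec n _).1]
  rw [← Finset.mul_sum, ← mul_add, ht, mul_zero]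

lemma psi_mul_f2 (n : ℕ) (g : MvPolynomial (Fin (n + 2) ⊕ Fin (n + 2)) ℂ) :
    psi n (g * f2 n) = 0 := by
  have h : g * f2 n = g * monomial (bdexp n) 1 +
      g * monomial (gexp n (Fin.last n, Fin.last n)) 1 - g * f1 n := by
    rw [gexp_last, bdexp, ← X_mul_X, f1, f2]; ring
  rw [h, map_sub, map_add, psi_mul_f1, psi_mul_monomial n g _ (bdexp_spec n).1,
    psi_mul_monomial n g _ (gexp_spec n _).1, (bdexp_spec n).2, (gexp_spec n _).2, zl]
  ring

lemma psi_momIdeal (n : ℕ) (f : MvPolynomial (Fin (n + 2) ⊕ Fin (n + 2)) ℂ)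
    (hf : f ∈ momIdeal n) : psi n f = 0 := by
  obtain ⟨a, b, rfl⟩ := Ideal.mem_span_pair.1 hf
  rw [map_add, psi_mul_f1, psi_mul_f2, add_zero]

lemma psi_phi0 (n : ℕ) (f : MvPolynomial (Fin (n + 1) × Fin (n + 1)) ℂ) :
    psi n (phi0 n f) = Ideal.Quotient.mk _ f := by
  induction f using MvPolynomial.induction_on with
  | C a =>
    have h0 : val n 0 = 1 := by simp [val, rowsOf, colsOf, xs, ys, pairProd_zero]
    have h1 : mwt n (0 : Expo n) = 0 := by simp [mwt]
    have h2 : phi0 n (C a) = a • monomial (0 : Expo n) 1 := by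
      rw [phi0, aeval_C, Algebra.algebraMap_eq_smul_one]; rfl
    rw [h2, map_smul, psi_monomial, if_pos h1, h0, ← Algebra.algebraMap_eq_smul_one]
    rfl
  | add p q hp hq => rw [map_add, map_add, map_add, hp, hq]
  | mul_X p i hp =>
    have : phi0 n (X i) = monomial (gexp n i) 1 := by rw [phi0, aeval_X]
    rw [map_mul, this, psi_mul_monomial n _ _ (gexp_spec n i).1, hp, (gexp_spec n i).2, map_mul]

lemma phi_injective (n : ℕ) : Function.Injective (phi n) := by
  rw [injective_iff_map_eq_zero]
  intro r hr
  obtain ⟨f, rfl⟩ := Ideal.Quotient.mk_surjective r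
  rw [phi_mk, Ideal.Quotient.eq_zero_iff_mem] at hr
  rw [← psi_phi0, psi_momIdeal n _ hr]

/-! ### The image is the weight-zero part -/

lemma monomial_eq_prod (n : ℕ) (e : Expo n) :
    (monomial e 1 : MvPolynomial (Fin (n + 2) ⊕ Fin (n + 2)) ℂ) = ∏ i, X i ^ e i := by
  rw [monomial_eq, C_1, one_mul, Finsupp.prod_fintype]
  simp

lemma phi_zl (n : ℕ) : phi n (zl n) =
    Ideal.Quotient.mk _ (X (Sum.inl (idxA n)) * X (Sum.inr (idxA n))) := by
  rw [zl, phi_mk, phi0, aeval_X, gexp_last]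

lemma prod_map_sum {n : ℕ} {S : Type*} [CommRing S] (U : Fin (n + 1) → S) (c : Fin n → ℕ) :
    ((∑ i : Fin n, c i • ({i.castSucc} : Multiset (Fin (n + 1)))).map U).prod =
      ∏ i : Fin n, U i.castSucc ^ c i := by
  have : ∀ s : Finset (Fin n),
      ((∑ i ∈ s, c i • ({i.castSucc} : Multiset (Fin (n + 1)))).map U).prod =
      ∏ i ∈ s, U i.castSucc ^ c i := by
    intro s
    induction s using Finset.induction_on with
    | empty => simp
    | insert a s ha ih =>
      rw [Finset.sum_insert ha, Finset.prod_insert ha, Multiset.map_add, Multiset.prod_add, ih,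
        Multiset.map_nsmul, Multiset.prod_nsmul]
      simp
  exact this _

lemma phi_val (n : ℕ) (e : Expo n) (he : mwt n e = 0) :
    phi n (val n e) = Ideal.Quotient.mk _ (monomial e 1) := by
  rw [mwt_eq_zero_iff] at he
  have h1 := map_pairProd (Mb n) (phi n).toRingHom (Uq n) (Vq n)
    (fun i j => mk_phi0_Mentry n i j) (card_rows n e)
  have h1' : phi n (pairProd (Mb n) (rowsOf n e) (colsOf n e)) = _ := h1
  have hU : ∀ i : Fin n, Uq n i.castSucc = Ideal.Quotient.mk _ (X (Sum.inl (emb n i))) := by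
    intro i; simp [Uq, uexp, X]
  have hV : ∀ i : Fin n, Vq n i.castSucc = Ideal.Quotient.mk _ (X (Sum.inr (emb n i))) := by
    intro i; simp [Vq, vexp, X]
  have hUl : Uq n (Fin.last n) = Ideal.Quotient.mk _ (X (Sum.inl (idxA n))) *
      Ideal.Quotient.mk _ (X (Sum.inr (idxB n))) := by
    simp only [Uq, uexp, Fin.lastCases_last, ← X_mul_X, map_mul]
  have hVl : Vq n (Fin.last n) = Ideal.Quotient.mk _ (X (Sum.inl (idxB n))) *
      Ideal.Quotient.mk _ (X (Sum.inr (idxA n))) := by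
    simp only [Vq, vexp, Fin.lastCases_last, ← X_mul_X, map_mul]
  rw [val, map_mul, map_mul, map_pow, map_pow, map_neg, phi_zl, mk_bd, h1', rowsOf, colsOf,
    Multiset.map_add, Multiset.map_add, Multiset.prod_add, Multiset.prod_add, xs, ys,
    prod_map_sum, prod_map_sum, ← xs, ← ys, Multiset.map_nsmul, Multiset.map_nsmul,
    Multiset.prod_nsmul, Multiset.prod_nsmul, Multiset.map_singleton, Multiset.map_singleton,
    Multiset.prod_singleton, Multiset.prod_singleton, hUl, hVl, monomial_eq_prod,
    Fintype.prod_sum_type, prod_fin_two, prod_fin_two]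
  simp only [hU, hV, map_mul, map_prod, map_pow]
  -- `t`, `t'` count the factors `ad`, `bc`, and `k`, `l` the remaining factors `ac`, `bd`.
  generalize ht : Multiset.card (ys n e) - Multiset.card (xs n e) = t
  generalize ht' : Multiset.card (xs n e) - Multiset.card (ys n e) = t'
  obtain ⟨k, hk⟩ : ∃ k, e (Sum.inl (idxA n)) = t + k := Nat.exists_eq_add_of_le (by omega)
  obtain ⟨l, hl⟩ : ∃ l, e (Sum.inl (idxB n)) = t' + l := Nat.exists_eq_add_of_le (by omega)
  have hm : e (Sum.inr (idxA n)) = t' + k := by omega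
  have hp : e (Sum.inr (idxB n)) = t + l := by omega
  rw [hk, hl, hm, hp, Nat.add_sub_cancel_left, Nat.add_sub_cancel_left]
  ring

lemma range_phi (n : ℕ) :
    Subalgebra.toSubmodule (phi n).range =
      Submodule.span ℂ
        {q : QM n | ∃ e : Fin (n + 2) ⊕ Fin (n + 2) → ℕ, mwt n e = 0 ∧
          q = Ideal.Quotient.mk (momIdeal n)
            (∏ i : Fin (n + 2) ⊕ Fin (n + 2), X i ^ e i)} := by
  apply le_antisymm
  · rintro _ ⟨r, rfl⟩
    obtain ⟨f, rfl⟩ := Ideal.Quotient.mk_surjective r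
    change phi n (Ideal.Quotient.mk _ f) ∈ _
    rw [phi_mk]
    induction f using MvPolynomial.induction_on with
    | C a =>
      have h2 : phi0 n (C a) = a • 1 := by
        rw [phi0, aeval_C, Algebra.algebraMap_eq_smul_one]
      rw [h2]
      change a • (1 : QM n) ∈ _
      refine Submodule.smul_mem _ a (Submodule.subset_span ?_)
      exact ⟨0, by simp [mwt], by simp⟩
    | add p q hp hq => rw [map_add, map_add]; exact Submodule.add_mem _ hp hq
    | mul_X p i hp =>
      have : phi0 n (X i) = monomial (gexp n i) 1 := by rw [phi0, aeval_X]
      rw [map_mul, map_mul, this]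
      generalize Ideal.Quotient.mk (momIdeal n) (phi0 n p) = r at hp
      induction hp using Submodule.span_induction with
      | mem x hx =>
        obtain ⟨e, he, rfl⟩ := hx
        refine Submodule.subset_span ⟨⇑(Finsupp.equivFunOnFinite.symm e + gexp n i), ?_, ?_⟩
        · rw [mwt_add, (gexp_spec n i).1, add_zero]; exact he
        · rw [monomial_eq_prod, ← map_mul, ← Finset.prod_mul_distrib]
          simp [pow_add]
      | zero => rw [zero_mul]; exact Submodule.zero_mem _
      | add x y _ _ hx hy => rw [add_mul]; exact Submodule.add_mem _ hx hy
      | smul a x _ hx => rw [smul_mul_assoc]; exact Submodule.smul_mem _ a hx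
  · rw [Submodule.span_le]
    rintro _ ⟨e, he, rfl⟩
    refine ⟨val n (Finsupp.equivFunOnFinite.symm e), ?_⟩
    change phi n _ = _
    rw [phi_val n _ (by exact he), monomial_eq_prod]
    rfl

/-- Paper's explicit presentation of the symplectic singularity `Z_X ≅ 𝒴(A,0,0)` for `X`
the blow-up of `ℙⁿ` at a point: the subalgebra of weight-`(0,0)` elements is isomorphic
to `ℂ[z_{ij}]/J`. -/
theorem stmt8 (n : ℕ) (hn : 2 ≤ n) :
    ∃ A : Subalgebra ℂ (MvPolynomial (Fin (n + 2) ⊕ Fin (n + 2)) ℂ ⧸ momIdeal n),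
      Subalgebra.toSubmodule A =
        Submodule.span ℂ
          {q : MvPolynomial (Fin (n + 2) ⊕ Fin (n + 2)) ℂ ⧸ momIdeal n |
            ∃ e : Fin (n + 2) ⊕ Fin (n + 2) → ℕ, mwt n e = 0 ∧
              q = Ideal.Quotient.mk (momIdeal n)
                (∏ i : Fin (n + 2) ⊕ Fin (n + 2), X i ^ e i)} ∧
      Nonempty (A ≃ₐ[ℂ] (MvPolynomial (Fin (n + 1) × Fin (n + 1)) ℂ ⧸ Jideal n)) := by
  exact ⟨(phi n).range, range_phi n, ⟨(AlgEquiv.ofInjective (phi n) (phi_injective n)).symm⟩⟩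

end
end
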